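/- arXiv:1601.05706 — 3 statements merged into one kernel-verified Lean document; each statement's English description precedes it below -/
import Mathlib

section
/- For every integer m ≥ 1, the infinite series ∑_{j=0}^∞ B(m,j)/2^{m+2j} converges to 1; equivalently, ∑_{j=0}^∞ (m/(2j+m))·C(2j+m, j)·(1/4)^j = 2^m as an identity of real numbers. -/
noncomputable def bt (m j : ℕ) : ℝ :=
  ((m : ℝ) / (2 * j + m)) * (Nat.choose (2 * j + m) j) / 2 ^ (m + 2 * j)

lemma bt_zero (m : ℕ) : bt (m+1) 0 = 1 / 2 ^ (m+1) := by
  have h : (m : ℝ) + 1 ≠ 0 := by positivity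
  simp [bt, h]

lemma bt_zero_left (j : ℕ) : bt 0 j = 0 := by simp [bt]

lemma bt_rec (m j : ℕ) : bt (m+2) j = 2 * bt (m+1) (j+1) - bt m (j+1) := by
  have h1 := Nat.add_one_mul_choose_eq (2*j+m+2) j
  have h2 := Nat.choose_succ_right_eq (2*j+m+2) j
  rw [show 2*j+m+2-j = j+m+2 by omega] at h2
  have e1 : 2*(j+1)+(m+1) = 2*j+m+2+1 := by ring
  have e2 : 2*(j+1)+m = 2*j+m+2 := by ring
  have e3 : 2*j+(m+2) = 2*j+m+2 := by ring
  have h1' : ((2*j+m+2+1).choose (j+1) : ℝ) = (2*j+m+3) * (2*j+m+2).choose j / (j+1) := by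
    rw [eq_div_iff (by positivity)]
    have : (((2*j+m+2+1) * (2*j+m+2).choose j : ℕ) : ℝ) = _ := congrArg Nat.cast h1
    push_cast at this
    linarith
  have h2' : ((2*j+m+2).choose (j+1) : ℝ) = (2*j+m+2).choose j * (j+m+2) / (j+1) := by
    rw [eq_div_iff (by positivity)]
    exact_mod_cast h2
  unfold bt
  rw [e1, e2, e3, h1', h2', show m+2+2*j = (m+2*j)+2 by ring,
    show m+1+2*(j+1) = (m+2*j)+3 by ring, show m+2*(j+1) = (m+2*j)+2 by ring]
  push_cast
  simp only [pow_add (2:ℝ) (m+2*j)]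
  have : (2:ℝ)^(m+2*j) ≠ 0 := by positivity
  have a1 : (2*j+(m+2) : ℝ) ≠ 0 := by positivity
  have a2 : (2*(j+1)+(m+1) : ℝ) ≠ 0 := by positivity
  have a3 : (2*(j+1)+m : ℝ) ≠ 0 := by positivity
  have a4 : (j+1 : ℝ) ≠ 0 := by positivity
  rw [show (2*j+m+3 : ℝ) = 2*(j+1)+(m+1) by ring]
  rw [show (2*j+(m+2) : ℝ) = 2*(j+1)+m by ring]
  field_simp
  ring

noncomputable def ca (j : ℕ) : ℝ := (Nat.centralBinom j : ℝ) / 4 ^ j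

lemma ca_succ (j : ℕ) : ca (j+1) = ca j * (2*j+1) / (2*j+2) := by
  have h : (((j+1) * Nat.centralBinom (j+1) : ℕ) : ℝ) = _ :=
    congrArg Nat.cast (Nat.succ_mul_centralBinom_succ j)
  push_cast at h
  unfold ca
  rw [pow_succ, eq_div_iff (by positivity)]
  field_simp
  linarith

lemma ca_nonneg (j : ℕ) : 0 ≤ ca j := by unfold ca; positivity

lemma ca_sq (j : ℕ) : ca j ^ 2 ≤ 1 / (2*j+1) := by
  induction j with
  | zero => simp [ca]
  | succ j ih =>
    rw [ca_succ, div_pow, mul_pow]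
    calc ca j ^ 2 * (2*j+1:ℝ)^2 / (2*j+2)^2 ≤ (1 / (2*j+1)) * (2*j+1:ℝ)^2 / (2*j+2)^2 := by gcongr
      _ = (2*j+1:ℝ) / (2*j+2)^2 := by field_simp
      _ ≤ _ := by
        push_cast
        rw [div_le_div_iff₀ (by positivity) (by positivity)]
        nlinarith

lemma ca_tendsto : Filter.Tendsto ca Filter.atTop (nhds 0) := by
  have h : Filter.Tendsto (fun j => ca j ^ 2) Filter.atTop (nhds 0) := by
    refine squeeze_zero (fun j => sq_nonneg _) (fun j => (ca_sq j).trans ?_)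
      (tendsto_one_div_add_atTop_nhds_zero_nat (𝕜 := ℝ))
    gcongr
    have : (0:ℝ) ≤ j := by positivity
    linarith
  have h2 := h.sqrt
  simpa [Real.sqrt_sq (ca_nonneg _)] using h2

lemma bt_one (j : ℕ) : bt 1 j = ca j - ca (j+1) := by
  have h1 := Nat.add_one_mul_choose_eq (2*j) j
  rw [Nat.choose_symm_half] at h1
  have h : (((2*j+1) * (2*j).choose j : ℕ) : ℝ) = _ := congrArg Nat.cast h1
  push_cast at h
  have h' : ((2*j+1).choose j : ℝ) = (2*j+1) * (2*j).choose j / (j+1) := by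
    rw [eq_div_iff (by positivity)]
    linarith
  rw [ca_succ]
  unfold bt ca
  rw [h', Nat.centralBinom_eq_two_mul_choose, pow_add, pow_mul]
  norm_num
  field_simp
  ring

lemma hasSum_one : HasSum (bt 1) 1 := by
  rw [hasSum_iff_tendsto_nat_of_nonneg (fun j => by unfold bt; positivity)]
  simp only [bt_one, Finset.sum_range_sub']
  simpa [ca] using ca_tendsto.const_sub (ca 0)

lemma hasSum_shift (m : ℕ) (h : HasSum (bt (m+1)) 1) :
    HasSum (fun j => bt (m+1) (j+1)) (1 - 1/2^(m+1)) := by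
  rw [hasSum_nat_add_iff' (f := bt (m+1)) 1 |>.symm] at h
  simpa [bt_zero] using h

lemma hasSum_main (m : ℕ) : HasSum (bt (m+1)) 1 ∧
    HasSum (fun j => bt m (j+1)) (1 - 1/2^m) := by
  induction m with
  | zero => exact ⟨hasSum_one, by simpa [bt_zero_left] using hasSum_zero⟩
  | succ m ih =>
    have hs := hasSum_shift m ih.1
    refine ⟨?_, hs⟩
    have := (hs.mul_left 2).sub ih.2
    simp only [← bt_rec] at this
    have e : (2 * (1 - 1 / 2 ^ (m + 1)) - (1 - 1 / 2 ^ m) : ℝ) = 1 := by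
      rw [pow_succ]
      field_simp
      ring
    rw [e] at this
    exact this

theorem ballot_series_sums_to_one (m : ℕ) (hm : 1 ≤ m) :
    HasSum (fun j : ℕ =>
      ((m : ℝ) / (2 * j + m)) * (Nat.choose (2 * j + m) j) / 2 ^ (m + 2 * j)) 1 := by
  obtain ⟨k, rfl⟩ := Nat.exists_eq_add_of_le' hm
  exact (hasSum_main k).1
end

section
/- For every integer m ≥ 1 and every real number x with 0 < x ≤ 1/4, the series ∑_{j=0}^∞ B(m,j)·x^j converges and equals ((1 − √(1 − 4x))/(2x))^m, where B(m,j) = (m/(2j+m))·C(2j+m, j). -/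
/-- Ballot numbers, with the value `1` at `(0, 0)`. -/
noncomputable def bal (m j : ℕ) : ℝ :=
  if m = 0 ∧ j = 0 then 1 else ((m : ℝ) / (2 * j + m)) * (Nat.choose (2 * j + m) j)

theorem bal_zero_right (m : ℕ) : bal m 0 = 1 := by
  unfold bal
  by_cases h : m = 0
  · simp [h]
  · have : (m : ℝ) ≠ 0 := by exact_mod_cast h
    simp [h]

theorem bal_zero_left (j : ℕ) : bal 0 (j + 1) = 0 := by
  simp [bal]

theorem bal_nonneg (m j : ℕ) : 0 ≤ bal m j := by
  unfold bal
  split_ifs <;> positivity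

theorem bal_rec (m j : ℕ) : bal (m + 1) (j + 1) = bal m (j + 1) + bal (m + 2) j := by
  have h1 : Nat.choose (2 * (j + 1) + (m + 1)) (j + 1)
      = Nat.choose (2 * j + m + 2) j + Nat.choose (2 * j + m + 2) (j + 1) := by
    rw [show 2 * (j + 1) + (m + 1) = (2 * j + m + 2) + 1 by ring, Nat.choose_succ_succ]
  have h2 := Nat.choose_succ_right_eq (2 * j + m + 2) j
  rw [show 2 * j + m + 2 - j = j + m + 2 by omega] at h2
  have h2' : (Nat.choose (2 * j + m + 2) (j + 1) : ℝ) * (j + 1)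
      = Nat.choose (2 * j + m + 2) j * (j + m + 2) := by exact_mod_cast h2
  simp only [bal]
  rw [h1, show 2 * (j + 1) + m = 2 * j + m + 2 by ring,
    show 2 * j + (m + 2) = 2 * j + m + 2 by ring]
  simp only [Nat.add_eq_zero_iff, one_ne_zero, and_false, if_false,
    OfNat.ofNat_ne_zero, false_and]
  push_cast
  generalize (Nat.choose (2 * j + m + 2) (j + 1) : ℝ) = B at *
  generalize (Nat.choose (2 * j + m + 2) j : ℝ) = A at *
  have hj : (j : ℝ) + 1 ≠ 0 := by positivity
  have hB : B = A * (j + m + 2) / (j + 1) := by rw [eq_div_iff hj, h2']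
  have e1 : 2 * ((j : ℝ) + 1) + (m + 1) ≠ 0 := by positivity
  have e2 : 2 * ((j : ℝ) + 1) + m ≠ 0 := by positivity
  have e3 : 2 * (j : ℝ) + (m + 2) ≠ 0 := by positivity
  rw [hB, show 2 * (j : ℝ) + (m + 2) = 2 * ((j : ℝ) + 1) + m by ring]
  field_simp
  ring

theorem bal_sum_rec (x : ℝ) (N m : ℕ) :
    ∑ j ∈ Finset.range (N + 1), bal (m + 1) j * x ^ j
      = ∑ j ∈ Finset.range (N + 1), bal m j * x ^ j
        + x * ∑ j ∈ Finset.range N, bal (m + 2) j * x ^ j := by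
  rw [Finset.sum_range_succ', Finset.sum_range_succ', Finset.mul_sum, bal_zero_right,
    bal_zero_right, add_right_comm, ← Finset.sum_add_distrib]
  congr 1
  refine Finset.sum_congr rfl fun j _ => ?_
  rw [bal_rec]
  ring

theorem bal_sum_zero (x : ℝ) (N : ℕ) :
    ∑ j ∈ Finset.range (N + 1), bal 0 j * x ^ j = 1 := by
  rw [Finset.sum_range_succ']
  simp [bal_zero_left, bal_zero_right]

theorem bal_sum_le (x c : ℝ) (hx : 0 < x) (hc : 1 ≤ c) (h : c = 1 + x * c ^ 2) (N : ℕ) :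
    ∀ m, ∑ j ∈ Finset.range N, bal m j * x ^ j ≤ c ^ m := by
  induction N with
  | zero => intro m; simp; positivity
  | succ N ih =>
    intro m
    induction m with
    | zero => rw [bal_sum_zero]; simp
    | succ m ihm =>
      rw [bal_sum_rec]
      have h1 := mul_le_mul_of_nonneg_left (ih (m + 2)) hx.le
      have h2 : c ^ (m + 1) = c ^ m + x * c ^ (m + 2) := by
        calc c ^ (m + 1) = c ^ m * c := pow_succ _ _
          _ = c ^ m * (1 + x * c ^ 2) := by rw [← h]
          _ = _ := by ring
      linarith

theorem bal_hasSum (x c : ℝ) (hx : 0 < x) (hc : 1 ≤ c) (hc2 : c ≤ 2)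
    (h : c = 1 + x * c ^ 2) (m : ℕ) : HasSum (fun j => bal m j * x ^ j) (c ^ m) := by
  have hnn : ∀ m j, 0 ≤ bal m j * x ^ j := fun m j => mul_nonneg (bal_nonneg m j) (by positivity)
  have hs : ∀ m, Summable (fun j => bal m j * x ^ j) := fun m =>
    summable_of_sum_range_le (hnn m) (fun N => bal_sum_le x c hx hc h N m)
  obtain ⟨F, hF⟩ : ∃ F : ℕ → ℝ, ∀ m, HasSum (fun j => bal m j * x ^ j) (F m) :=
    ⟨_, fun m => (hs m).hasSum⟩
  have hF0 : ∀ m, 0 ≤ F m := fun m => (hF m).nonneg (hnn m)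
  have hFc : ∀ m, F m ≤ c ^ m := fun m =>
    le_of_tendsto' (hF m).tendsto_sum_nat (fun N => bal_sum_le x c hx hc h N m)
  have hFz : F 0 = 1 := by
    refine tendsto_nhds_unique
      ((hF 0).tendsto_sum_nat.comp (Filter.tendsto_add_atTop_nat 1)) ?_
    refine tendsto_const_nhds.congr fun N => ?_
    simp only [Function.comp]
    rw [bal_sum_zero]
  have hFr : ∀ m, F (m + 1) = F m + x * F (m + 2) := by
    intro m
    refine tendsto_nhds_unique
      ((hF (m + 1)).tendsto_sum_nat.comp (Filter.tendsto_add_atTop_nat 1)) ?_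
    refine (((hF m).tendsto_sum_nat.comp (Filter.tendsto_add_atTop_nat 1)).add
      ((hF (m + 2)).tendsto_sum_nat.const_mul x)).congr fun N => ?_
    simp only [Function.comp]
    rw [bal_sum_rec]
  have hcp : 0 < c := by linarith
  -- normalised defect
  obtain ⟨E, hE⟩ : ∃ E : ℕ → ℝ, ∀ m, F m = c ^ m * (1 - E m) :=
    ⟨fun m => 1 - F m / c ^ m, fun m => by field_simp; ring⟩
  have hE1 : ∀ m, E m ≤ 1 := by
    intro m
    have h1 := hF0 m
    rw [hE] at h1
    have := nonneg_of_mul_nonneg_right h1 (pow_pos hcp m)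
    linarith
  have hE0 : ∀ m, 0 ≤ E m := by
    intro m
    have h1 := hFc m
    rw [hE] at h1
    have hp := pow_pos hcp m
    by_contra hneg
    push Not at hneg
    nlinarith
  have hEz : E 0 = 0 := by
    have := hE 0
    rw [hFz] at this
    simp at this
    linarith
  have hEr : ∀ m, (c - 1) * (E (m + 2) - E (m + 1)) = E (m + 1) - E m := by
    intro m
    have h1 := hFr m
    rw [hE, hE, hE] at h1
    have h2 : c ^ m * (c * (1 - E (m + 1))) =
        c ^ m * ((1 - E m) + x * c ^ 2 * (1 - E (m + 2))) := by
      linear_combination h1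
    have h3 := mul_left_cancel₀ (pow_pos hcp m).ne' h2
    have h4 : x * c ^ 2 = c - 1 := by linarith
    rw [h4] at h3
    linarith
  have hinc : ∀ m, E 1 ≤ E (m + 1) - E m := by
    intro m
    induction m with
    | zero => simp [hEz]
    | succ m ih =>
      have h1 := hEr m
      have h2 := hE0 1
      have hc1 : 0 < c - 1 := by rw [show c - 1 = x * c ^ 2 by linarith]; positivity
      show E 1 ≤ E (m + 2) - E (m + 1)
      by_contra hneg
      push Not at hneg
      nlinarith
  have hlin : ∀ m : ℕ, m * E 1 ≤ E m := by
    intro m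
    induction m with
    | zero => simp [hEz]
    | succ m ih => have := hinc m; push_cast; linarith
  have hE10 : E 1 = 0 := by
    by_contra hne
    have hpos : 0 < E 1 := lt_of_le_of_ne (hE0 1) (Ne.symm hne)
    obtain ⟨n, hn⟩ := exists_nat_gt (1 / E 1)
    rw [div_lt_iff₀ hpos] at hn
    linarith [hlin n, hE1 n]
  have hall : ∀ m, E m = 0 ∧ E (m + 1) = 0 := by
    intro m
    induction m with
    | zero => exact ⟨hEz, hE10⟩
    | succ m ih =>
      refine ⟨ih.2, ?_⟩
      have h1 := hEr m
      rw [ih.1, ih.2] at h1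
      have hc1 : 0 < c - 1 := by rw [show c - 1 = x * c ^ 2 by linarith]; positivity
      have h2 : (c - 1) * E (m + 2) = 0 := by linarith
      exact (mul_eq_zero.mp h2).resolve_left hc1.ne'
  have := hF m
  rw [hE, (hall m).1] at this
  simpa using this

theorem ballot_generating_function (m : ℕ) (hm : 1 ≤ m) (x : ℝ) (hx : 0 < x)
    (hx4 : x ≤ 1 / 4) :
    HasSum (fun j : ℕ => ((m : ℝ) / (2 * j + m)) * (Nat.choose (2 * j + m) j) * x ^ j)
      (((1 - Real.sqrt (1 - 4 * x)) / (2 * x)) ^ m) := by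
  have hs0 := Real.sqrt_nonneg (1 - 4 * x)
  have hs := Real.sq_sqrt (show 0 ≤ 1 - 4 * x by linarith)
  generalize Real.sqrt (1 - 4 * x) = s at *
  have hs1 : s ≤ 1 := by nlinarith
  have h := bal_hasSum x ((1 - s) / (2 * x)) hx
    (by rw [le_div_iff₀ (by positivity)]; nlinarith)
    (by rw [div_le_iff₀ (by positivity)]; nlinarith)
    (by field_simp; linear_combination (-1 : ℝ) * hs) m
  have e : (fun j : ℕ => ((m : ℝ) / (2 * j + m)) * (Nat.choose (2 * j + m) j) * x ^ j)
      = fun j => bal m j * x ^ j := by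
    funext j
    rw [bal, if_neg (by omega)]
  rw [e]
  exact h
end

section
/- Suppose g : ℕ × ℕ → ℚ satisfies g(m,0) = 1 for all m ≥ 1, g(0,j) = 0 for all j ≥ 1, and the recurrence g(m,j) = g(m-1,j) + g(m+1,j-1) for all m ≥ 1 and j ≥ 1. Then for all m ≥ 1 and j ≥ 0, g(m,j) = (m/(2j+m))·C(2j+m, j). -/
theorem ballot_recurrence_unique (g : ℕ × ℕ → ℚ)
    (h0 : ∀ m : ℕ, 1 ≤ m → g (m, 0) = 1)
    (h1 : ∀ j : ℕ, 1 ≤ j → g (0, j) = 0)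
    (hrec : ∀ m j : ℕ, 1 ≤ m → 1 ≤ j → g (m, j) = g (m - 1, j) + g (m + 1, j - 1)) :
    ∀ m j : ℕ, 1 ≤ m →
      g (m, j) = ((m : ℚ) / (2 * j + m)) * (Nat.choose (2 * j + m) j) := by
  intro m j
  induction j generalizing m with
  | zero =>
    intro hm
    have : (m : ℚ) ≠ 0 := by positivity
    rw [h0 m hm]
    simp [this]
  | succ j ih =>
    intro _
    induction m with
    | zero => rw [h1 _ (by omega)]; simp
    | succ m ihm =>
      have hr := hrec (m + 1) (j + 1) (by omega) (by omega)
      simp only [Nat.add_sub_cancel] at hr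
      have hm' : g (m, j + 1) = ((m : ℚ) / (2 * (j + 1 : ℕ) + m))
          * (Nat.choose (2 * (j + 1) + m) (j + 1)) := by
        rcases Nat.eq_zero_or_pos m with h | h
        · subst h; rw [h1 _ (by omega)]; simp
        · exact ihm h
      rw [hr, hm', ih (m + 1 + 1) (by omega)]
      have e1 : 2 * j + (m + 1 + 1) = 2 * (j + 1) + m := by ring
      have e2 : 2 * (j + 1) + (m + 1) = (2 * (j + 1) + m) + 1 := by ring
      rw [e1, e2, Nat.choose_succ_succ]
      have hc := Nat.choose_succ_right_eq (2 * (j + 1) + m) j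
      have e3 : 2 * (j + 1) + m - j = j + m + 2 := by omega
      rw [e3] at hc
      have hq : ((Nat.choose (2 * (j + 1) + m) (j + 1) : ℕ) : ℚ)
          = (Nat.choose (2 * (j + 1) + m) j : ℕ) * (j + m + 2) / (j + 1) := by
        rw [eq_div_iff (by positivity)]
        exact_mod_cast hc
      push_cast
      rw [hq]
      generalize ((Nat.choose (2 * (j + 1) + m) j : ℕ) : ℚ) = a
      have p1 : (2 * ((j : ℚ) + 1) + m) ≠ 0 := by positivity
      have p2 : (2 * (j : ℚ) + (m + 1 + 1)) ≠ 0 := by positivity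
      have p3 : (2 * ((j : ℚ) + 1) + (m + 1)) ≠ 0 := by positivity
      have e4 : (2 * (j : ℚ) + (m + 1 + 1)) = 2 * ((j : ℚ) + 1) + m := by ring
      rw [e4]
      field_simp
      ring
end
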